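/- arXiv:2103.03742 — 3 statements merged into one kernel-verified Lean document; each statement's English description precedes it below -/
import Mathlib

section
/- Let S be a symmetric positive semidefinite real N×N matrix, let P be a real M×N matrix with linearly independent rows, and assume xᵀ S x > 0 for every x ≠ 0 with P x = 0. Let P* be a real M×N matrix with P (P*)ᵀ = I_M and S (P*)ᵀ = 0, and let T be a real N×N matrix such that for every η ∈ ℝ^N one has P (T η) = 0 and η − S (T η) ∈ range(Pᵀ). Then for every η ∈ ℝ^N the pair (w, μ) = (S η, P η) is the unique pair in ℝ^N × ℝ^M satisfying T w + (P*)ᵀ μ = η and P* w = 0. Consequently the reflexive generalized inverse of T constructed from the saddle-point system with constraint matrix P* is S itself (S†† = S). -/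
open Matrix

/-!
Applying `P*` to `S (T η) + Pᵀ lam = η` identifies the multiplier as `lam = P* η`, because
`P* S = 0` and `P* Pᵀ = 1`. Hence `S T + Pᵀ P* = 1`, and together with `S P*ᵀ = 0`, `P T = 0` and
`P P*ᵀ = 1` this is one block identity:

  `(S, Pᵀ; P, 0) * (T, P*ᵀ; P*, 0) = 1`.

For square matrices a right inverse is a left inverse, so the second block matrix maps `(w, μ)` to
`(η, 0)` exactly when `(w, μ)` is the image of `(η, 0)` under the first, which is `(S η, P η)`.
-/

variable {m n R : Type*}

/-- The pair `(u, lam)` solves the saddle-point system with operator `S`, constraint matrix `P` and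
data `η`; the constraint `P u = 0` is homogeneous. -/
def IsSaddlePointSolution [Fintype m] [Fintype n] [NonUnitalNonAssocSemiring R]
    (S : Matrix n n R) (P : Matrix m n R) (η u : n → R) (lam : m → R) : Prop :=
  S *ᵥ u + Pᵀ *ᵥ lam = η ∧ P *ᵥ u = 0

/-- The matrix `T` sends each `η` to the primal component of a solution of the saddle-point system
of `S` and `P` with data `η`; the solution need not be unique. -/
def IsSaddlePointSolutionOperator [Fintype m] [Fintype n] [NonUnitalNonAssocSemiring R]
    (S : Matrix n n R) (P : Matrix m n R) (T : Matrix n n R) : Prop :=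
  ∀ η, ∃ lam, IsSaddlePointSolution S P η (T *ᵥ η) lam

/-- The block matrix of the saddle-point system of `S` and `P`, acting on pairs `(u, lam)` encoded
as functions on `n ⊕ m`. -/
def saddlePointMatrix [Zero R] (S : Matrix n n R) (P : Matrix m n R) :
    Matrix (n ⊕ m) (n ⊕ m) R :=
  fromBlocks S Pᵀ P 0

section SaddlePoint

variable [Fintype m] [Fintype n]

theorem mulVec_eq_iff_eq_mulVec_of_mul_eq_one [DecidableEq n] [Semiring R] [IsStablyFiniteRing R]
    {A B : Matrix n n R} (hAB : A * B = 1) {v w : n → R} : B *ᵥ v = w ↔ v = A *ᵥ w := by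
  have hBA : B * A = 1 := mul_eq_one_comm.mp hAB
  constructor
  · rintro rfl
    rw [mulVec_mulVec, hAB, one_mulVec]
  · rintro rfl
    rw [mulVec_mulVec, hBA, one_mulVec]

theorem saddlePointMatrix_mulVec_elim [NonUnitalNonAssocSemiring R] (S : Matrix n n R)
    (P : Matrix m n R) (u : n → R) (lam : m → R) :
    saddlePointMatrix S P *ᵥ Sum.elim u lam = Sum.elim (S *ᵥ u + Pᵀ *ᵥ lam) (P *ᵥ u) := by
  simp [saddlePointMatrix, fromBlocks_mulVec]

variable {S T : Matrix n n R} {P Pstar : Matrix m n R} {η u : n → R} {lam : m → R}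

theorem isSaddlePointSolution_iff_saddlePointMatrix_mulVec [NonUnitalNonAssocSemiring R] :
    IsSaddlePointSolution S P η u lam ↔
      saddlePointMatrix S P *ᵥ Sum.elim u lam = Sum.elim η 0 := by
  rw [saddlePointMatrix_mulVec_elim, Sum.elim_eq_iff, IsSaddlePointSolution]

theorem IsSaddlePointSolution.multiplier_eq [DecidableEq m] [Semiring R]
    (h : IsSaddlePointSolution S P η u lam) (hPstarS : Pstar * S = 0)
    (hPstarP : Pstar * Pᵀ = 1) : lam = Pstar *ᵥ η :=
  calc
    lam = (Pstar * S) *ᵥ u + (Pstar * Pᵀ) *ᵥ lam := by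
      rw [hPstarS, hPstarP, zero_mulVec, one_mulVec, zero_add]
    _ = Pstar *ᵥ (S *ᵥ u + Pᵀ *ᵥ lam) := by simp only [mulVec_add, mulVec_mulVec]
    _ = Pstar *ᵥ η := by rw [h.1]

namespace IsSaddlePointSolutionOperator

variable [Semiring R]

theorem constraint_mul_eq_zero (hT : IsSaddlePointSolutionOperator S P T) : P * T = 0 := by
  refine ext_iff_mulVec.mpr fun η ↦ ?_
  obtain ⟨lam, -, hconstraint⟩ := hT η
  rw [← mulVec_mulVec, hconstraint, zero_mulVec]

variable [DecidableEq m] [DecidableEq n]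

theorem mul_add_transpose_mul_eq_one (hT : IsSaddlePointSolutionOperator S P T)
    (hPstarS : Pstar * S = 0) (hPstarP : Pstar * Pᵀ = 1) : S * T + Pᵀ * Pstar = 1 := by
  refine ext_iff_mulVec.mpr fun η ↦ ?_
  obtain ⟨lam, hlam⟩ := hT η
  obtain rfl := hlam.multiplier_eq hPstarS hPstarP
  simpa only [add_mulVec, one_mulVec, mulVec_mulVec] using hlam.1

theorem saddlePointMatrix_mul_eq_one (hT : IsSaddlePointSolutionOperator S P T)
    (hPPstar : P * Pstarᵀ = 1) (hPstarP : Pstar * Pᵀ = 1) (hSPstar : S * Pstarᵀ = 0)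
    (hPstarS : Pstar * S = 0) : saddlePointMatrix S P * saddlePointMatrix T Pstar = 1 := by
  simp only [saddlePointMatrix, fromBlocks_multiply, Matrix.mul_zero, Matrix.zero_mul, add_zero,
    hT.mul_add_transpose_mul_eq_one hPstarS hPstarP, hSPstar, hT.constraint_mul_eq_zero, hPPstar,
    fromBlocks_one]

end IsSaddlePointSolutionOperator

theorem saddle_point_double_dagger_general [DecidableEq m] [CommSemiring R]
    (hPPstar : P * Pstarᵀ = 1) (hSPstar : S * Pstarᵀ = 0) (hPstarS : Pstar * S = 0)
    (hT : IsSaddlePointSolutionOperator S P T) (η w : n → R) (μ : m → R) :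
    IsSaddlePointSolution T Pstar η w μ ↔ w = S *ᵥ η ∧ μ = P *ᵥ η := by
  classical
  have hPstarP : Pstar * Pᵀ = 1 := by simpa using congrArg transpose hPPstar
  have hmul : saddlePointMatrix S P * saddlePointMatrix T Pstar = 1 :=
    hT.saddlePointMatrix_mul_eq_one hPPstar hPstarP hSPstar hPstarS
  rw [isSaddlePointSolution_iff_saddlePointMatrix_mulVec,
    mulVec_eq_iff_eq_mulVec_of_mul_eq_one hmul, saddlePointMatrix_mulVec_elim, Sum.elim_eq_iff,
    mulVec_zero, add_zero]

end SaddlePoint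

/-- Under the assumptions of Statement 2, for every `η ∈ ℝ^N`
the pair `(w, μ) = (S η, P η)` is the unique pair satisfying the dual
saddle-point system `T w + (P*)ᵀ μ = η`, `P* w = 0`; consequently the reflexive
generalized inverse of `T` constructed from the saddle-point system with
constraint matrix `P*` is `S` itself (`S†† = S`). -/
theorem saddle_point_double_dagger
    (N M : ℕ) (S : Matrix (Fin N) (Fin N) ℝ)
    (P Pstar : Matrix (Fin M) (Fin N) ℝ)
    (T : Matrix (Fin N) (Fin N) ℝ)
    (hSsymm : S = Sᵀ)
    (hSpsd : ∀ x : Fin N → ℝ, 0 ≤ x ⬝ᵥ S.mulVec x)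
    (hPsurj : Function.Surjective P.mulVec)
    (hSpos : ∀ x : Fin N → ℝ, P.mulVec x = 0 → x ≠ 0 → 0 < x ⬝ᵥ S.mulVec x)
    (hPPstar : P * Pstarᵀ = 1)
    (hSPstar : S * Pstarᵀ = 0)
    (hTker : ∀ η : Fin N → ℝ, P.mulVec (T.mulVec η) = 0)
    (hTsolve : ∀ η : Fin N → ℝ, ∃ lam : Fin M → ℝ,
      S.mulVec (T.mulVec η) + Pᵀ.mulVec lam = η) :
    ∀ η : Fin N → ℝ, ∀ (w : Fin N → ℝ) (μ : Fin M → ℝ),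
      (T.mulVec w + Pstarᵀ.mulVec μ = η ∧ Pstar.mulVec w = 0) ↔
        (w = S.mulVec η ∧ μ = P.mulVec η) :=
  saddle_point_double_dagger_general hPPstar hSPstar
    (by simpa [← hSsymm] using congrArg transpose hSPstar)
    fun η ↦ (hTsolve η).imp fun _ hlam ↦ ⟨hlam, hTker η⟩
end

section
/- Under the stated assumptions, for all η, ζ in W* with coordinate vectors η⃗, ζ⃗, one has η⃗ᵀ S† ζ⃗ ≤ α⁻¹ · p*(η) · p*(ζ). (Upper bound of Proposition 2.7: the bilinear form s*(η, ζ) := ζ⃗ᵀ S† η⃗ is continuous with respect to the dual seminorm p*.) -/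
open Matrix

/-!
The vector `x = S† d` solves a saddle-point system with load `d`, and testing that system against
`x ∈ ker P` kills the multiplier: `xᵀ S x = ζ v`, where `ζ = ∑ dₙ φₙ` and `v = ∑ xₙ eₙ ∈ ker Π̂`.
Coercivity and the definition of `p*` then give `α p(v)² ≤ ζ v ≤ p*(ζ) p(v)`, so
`p(v) ≤ α⁻¹ p*(ζ)`, while `cᵀ S† d = η v ≤ p*(η) p(v)` for `η = ∑ cₙ φₙ`.
-/

section DualSeminorm

variable {V : Type*} [AddCommGroup V] [Module ℝ V]

/-- The dual seminorm `p*` of a linear functional, relative to a subspace `K` (the kernel of `Π̂` in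
the application). A nonzero `v ∈ K` with `p v = 0` contributes `η v / 0 = 0`, which is harmless
because the set of quotients is symmetric about `0`. -/
noncomputable def dualSeminorm (p : Seminorm ℝ V) (K : Submodule ℝ V) (η : V →ₗ[ℝ] ℝ) : ℝ :=
  sSup ((fun v => η v / p v) '' {v : V | v ∈ K ∧ v ≠ 0})

/-- Domination of a linear functional by a multiple of `p` on `K`, which makes the supremum defining
`dualSeminorm p K η` finite. A one-sided bound suffices, as `K` is symmetric. -/
def DominatedOn (p : Seminorm ℝ V) (K : Submodule ℝ V) (η : V →ₗ[ℝ] ℝ) : Prop :=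
  ∃ C : ℝ, ∀ v ∈ K, η v ≤ C * p v

variable {p : Seminorm ℝ V} {K : Submodule ℝ V} {η ζ : V →ₗ[ℝ] ℝ} {v : V} {α : ℝ}

variable (p K η) in
lemma dualSeminorm_nonneg : 0 ≤ dualSeminorm p K η := by
  rcases Set.eq_empty_or_nonempty {v : V | v ∈ K ∧ v ≠ 0} with hempty | ⟨v, hv, hv0⟩
  · simp [dualSeminorm, hempty]
  · apply Real.sSup_nonneg'
    rcases le_total 0 (η v) with hpos | hneg
    · exact ⟨_, ⟨v, ⟨hv, hv0⟩, rfl⟩, div_nonneg hpos (apply_nonneg p v)⟩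
    · refine ⟨_, ⟨-v, ⟨K.neg_mem hv, neg_ne_zero.mpr hv0⟩, rfl⟩, ?_⟩
      exact div_nonneg (by simpa using hneg) (apply_nonneg p _)

lemma DominatedOn.bddAbove (hη : DominatedOn p K η) :
    BddAbove ((fun v => η v / p v) '' {v : V | v ∈ K ∧ v ≠ 0}) := by
  obtain ⟨C, hC⟩ := hη
  refine ⟨max C 0, ?_⟩
  rintro _ ⟨v, ⟨hv, -⟩, rfl⟩
  refine div_le_of_le_mul₀ (apply_nonneg p v) (le_max_right C 0) ((hC v hv).trans ?_)
  gcongr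
  exact le_max_left C 0

lemma DominatedOn.apply_le_dualSeminorm_mul (hη : DominatedOn p K η) (hv : v ∈ K) :
    η v ≤ dualSeminorm p K η * p v := by
  rcases (apply_nonneg p v).eq_or_lt' with hpv | hpv
  · obtain ⟨C, hC⟩ := hη
    simpa [hpv] using hC v hv
  · have hv0 : v ≠ 0 := fun h => hpv.ne' (by simp [h])
    rw [← div_le_iff₀ hpv]
    exact le_csSup hη.bddAbove ⟨v, ⟨hv, hv0⟩, rfl⟩

lemma DominatedOn.mul_le_dualSeminorm (hη : DominatedOn p K η) (hv : v ∈ K)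
    (hcoercive : α * p v ^ 2 ≤ η v) : α * p v ≤ dualSeminorm p K η := by
  rcases (apply_nonneg p v).eq_or_lt' with hpv | hpv
  · simpa [hpv] using dualSeminorm_nonneg p K η
  · refine le_of_mul_le_mul_right ?_ hpv
    calc α * p v * p v = α * p v ^ 2 := by ring
      _ ≤ η v := hcoercive
      _ ≤ dualSeminorm p K η * p v := hη.apply_le_dualSeminorm_mul hv

lemma DominatedOn.apply_le_inv_mul_dualSeminorm_mul (hη : DominatedOn p K η)
    (hζ : DominatedOn p K ζ) (hv : v ∈ K) (hα : 0 < α) (hcoercive : α * p v ^ 2 ≤ ζ v) :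
    η v ≤ α⁻¹ * dualSeminorm p K η * dualSeminorm p K ζ := by
  have hpv : p v ≤ α⁻¹ * dualSeminorm p K ζ :=
    (le_inv_mul_iff₀ hα).mpr (hζ.mul_le_dualSeminorm hv hcoercive)
  calc η v ≤ dualSeminorm p K η * p v := hη.apply_le_dualSeminorm_mul hv
    _ ≤ dualSeminorm p K η * (α⁻¹ * dualSeminorm p K ζ) :=
        mul_le_mul_of_nonneg_left hpv (dualSeminorm_nonneg p K η)
    _ = α⁻¹ * dualSeminorm p K η * dualSeminorm p K ζ := by ring

end DualSeminorm

lemma dominatedOn_of_norm_le_mul {V : Type*} [SeminormedAddCommGroup V] [NormedSpace ℝ V]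
    {p : Seminorm ℝ V} {K : Submodule ℝ V} {C : ℝ} (hpoincare : ∀ v ∈ K, ‖v‖ ≤ C * p v)
    (η : V →L[ℝ] ℝ) : DominatedOn p K η := by
  refine ⟨‖η‖ * C, fun v hv => ?_⟩
  calc η v ≤ ‖η v‖ := le_abs_self _
    _ ≤ ‖η‖ * ‖v‖ := η.le_opNorm v
    _ ≤ ‖η‖ * (C * p v) := mul_le_mul_of_nonneg_left (hpoincare v hv) (norm_nonneg η)
    _ = ‖η‖ * C * p v := (mul_assoc _ _ _).symm

section Coordinates

variable {ι κ R E F : Type*} [Fintype ι] [Fintype κ] [CommSemiring R]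
  [AddCommMonoid E] [Module R E] [AddCommMonoid F] [Module R F]

lemma apply_sum_smul_eq_dotProduct (η : E →ₗ[R] R) (e : ι → E) (x : ι → R) :
    η (∑ n, x n • e n) = (fun n => η (e n)) ⬝ᵥ x := by
  simp [dotProduct, mul_comm]

lemma apply_sum_smul_eq_zero_of_mulVec_eq_zero {T : E → F} {f : κ → E →ₗ[R] R} {b : κ → F}
    (hT : ∀ v, T v = ∑ i, f i v • b i) {e : ι → E} {P : Matrix κ ι R}
    (hP : ∀ i n, P i n = f i (e n)) {x : ι → R} (hx : P *ᵥ x = 0) :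
    T (∑ n, x n • e n) = 0 := by
  have hf (i : κ) : f i (∑ n, x n • e n) = 0 := by
    rw [apply_sum_smul_eq_dotProduct]
    simpa only [mulVec, hP, Pi.zero_apply] using congrFun hx i
  simp [hT, hf]

end Coordinates

lemma sum_smul_apply_of_biorthogonal {ι R E : Type*} [Fintype ι] [DecidableEq ι]
    [CommSemiring R] [TopologicalSpace R] [IsTopologicalSemiring R] [AddCommMonoid E]
    [TopologicalSpace E] [Module R E] {e : ι → E} {φ : ι → E →L[R] R}
    (hbiorth : ∀ n m, φ n (e m) = if n = m then 1 else 0) (c : ι → R) (m : ι) :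
    (∑ n, c n • φ n) (e m) = c m := by
  simp [hbiorth]

lemma dotProduct_mulVec_eq_of_saddlePoint {ι κ R : Type*} [Fintype ι] [Fintype κ] [CommRing R]
    {S : Matrix ι ι R} {P : Matrix κ ι R} {x y ξ : ι → R} {lam : κ → R}
    (hsolve : ξ - S *ᵥ x = Pᵀ *ᵥ lam) (hy : P *ᵥ y = 0) : y ⬝ᵥ S *ᵥ x = y ⬝ᵥ ξ := by
  have hlam : y ⬝ᵥ (ξ - S *ᵥ x) = 0 := by
    rw [hsolve, dotProduct_mulVec, vecMul_transpose, hy, zero_dotProduct]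
  rw [dotProduct_sub] at hlam
  exact (sub_eq_zero.mp hlam).symm

theorem dual_bilinear_form_continuous_general {V ι κ : Type*} [AddCommGroup V] [Module ℝ V]
    [Fintype ι] [Fintype κ] {p : Seminorm ℝ V} {K : Submodule ℝ V} {e : ι → V}
    {P : Matrix κ ι ℝ} (hP : ∀ x : ι → ℝ, P *ᵥ x = 0 → ∑ n, x n • e n ∈ K)
    {S : Matrix ι ι ℝ} {α : ℝ} (hα : 0 < α)
    (hcoercive : ∀ x : ι → ℝ, P *ᵥ x = 0 → α * p (∑ n, x n • e n) ^ 2 ≤ x ⬝ᵥ S *ᵥ x)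
    {Sdag : Matrix ι ι ℝ} (hker : ∀ ξ : ι → ℝ, P *ᵥ (Sdag *ᵥ ξ) = 0)
    (hsolve : ∀ ξ : ι → ℝ, ∃ lam : κ → ℝ, ξ - S *ᵥ (Sdag *ᵥ ξ) = Pᵀ *ᵥ lam)
    {η ζ : V →ₗ[ℝ] ℝ} (hη : DominatedOn p K η) (hζ : DominatedOn p K ζ)
    {c d : ι → ℝ} (hc : ∀ n, η (e n) = c n) (hd : ∀ n, ζ (e n) = d n) :
    c ⬝ᵥ Sdag *ᵥ d ≤ α⁻¹ * dualSeminorm p K η * dualSeminorm p K ζ := by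
  set x := Sdag *ᵥ d
  have hx : P *ᵥ x = 0 := hker d
  obtain ⟨lam, hlam⟩ := hsolve d
  have hηx : η (∑ n, x n • e n) = c ⬝ᵥ x := by simp only [apply_sum_smul_eq_dotProduct, hc]
  have henergy : x ⬝ᵥ S *ᵥ x = ζ (∑ n, x n • e n) := by
    rw [dotProduct_mulVec_eq_of_saddlePoint hlam hx, apply_sum_smul_eq_dotProduct, dotProduct_comm]
    simp only [hd]
  rw [← hηx]
  exact hη.apply_le_inv_mul_dualSeminorm_mul hζ (hP x hx) hα (henergy ▸ hcoercive x hx)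

/-- upper bound of Proposition 2.7. With `S†` the reflexive
generalized inverse of the stiffness matrix `S` obtained from the saddle-point
system with constraint matrix `P`, the bilinear form `s*(η,ζ) := ζ⃗ᵀ S† η⃗` on
`W*` is continuous with respect to the dual seminorm `p*`:
`η⃗ᵀ S† ζ⃗ ≤ α⁻¹ · p*(η) · p*(ζ)`. -/
theorem dual_bilinear_form_continuous
    {V : Type*} [NormedAddCommGroup V] [InnerProductSpace ℝ V] [CompleteSpace V]
    (p : Seminorm ℝ V) (hple : ∀ v : V, p v ≤ ‖v‖)
    (Pih : V →L[ℝ] V) (hidem : ∀ v : V, Pih (Pih v) = Pih v)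
    (hrange : ∀ v : V, p v = 0 ↔ ∃ u : V, Pih u = v)
    (Cpoi : ℝ) (hCpoi : 0 < Cpoi)
    (hpoincare : ∀ v : V, Pih v = 0 → ‖v‖ ≤ Cpoi * p v)
    (pstar : (V →L[ℝ] ℝ) → ℝ)
    (hpstar : ∀ η : V →L[ℝ] ℝ,
      pstar η = sSup ((fun v => η v / p v) '' {v : V | Pih v = 0 ∧ v ≠ 0}))
    (N M : ℕ) (e : Fin N → V) (φ : Fin N → (V →L[ℝ] ℝ))
    (hbiorth : ∀ n m, φ n (e m) = if n = m then 1 else 0)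
    -- `Ŵ ⊆ W`: the range of `Π̂` is contained in `W = span (e₁, …, e_N)`
    (hWhat : ∀ u : V, Pih u ∈ Submodule.span ℝ (Set.range e))
    -- `η ∘ Π̂ ∈ W*` for every `η ∈ W* = span (φ₁, …, φ_N)`
    (hWstarPih : ∀ η : V →L[ℝ] ℝ, η ∈ Submodule.span ℝ (Set.range φ) →
      η.comp Pih ∈ Submodule.span ℝ (Set.range φ))
    -- inf-sup condition between `W*` and `W`
    (β : ℝ) (hβ : 0 < β)
    (hinfsup : ∀ η : V →L[ℝ] ℝ, η ∈ Submodule.span ℝ (Set.range φ) →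
      β * ‖η‖ ≤ sSup ((fun w : V => η w / ‖w‖) ''
        {w : V | w ∈ Submodule.span ℝ (Set.range e) ∧ w ≠ 0}))
    -- `ê` is a basis of `Ŵ = range Π̂`, and `Π̂ v = Σᵢ ê*ᵢ(v) êᵢ`
    (ehat : Fin M → V) (ehatstar : Fin M → (V →L[ℝ] ℝ))
    (hehat_indep : LinearIndependent ℝ ehat)
    (hehat_span : ∀ v : V, (∃ u : V, Pih u = v) ↔
      v ∈ Submodule.span ℝ (Set.range ehat))
    (hPih_repr : ∀ v : V, Pih v = ∑ i, (ehatstar i v) • ehat i)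
    -- the matrix `P` with entries `P i m = ê*ᵢ(e_m)`
    (P : Matrix (Fin M) (Fin N) ℝ) (hP : ∀ i m, P i m = ehatstar i (e m))
    -- the stiffness matrix `S`: symmetric, positive semidefinite, and
    -- coercive/continuous with respect to `p` in the coordinates of `W`
    (S : Matrix (Fin N) (Fin N) ℝ)
    (hSsymm : S = Sᵀ)
    (hSpsd : ∀ x : Fin N → ℝ, 0 ≤ x ⬝ᵥ S.mulVec x)
    (α A : ℝ) (hα : 0 < α) (hA : 0 < A)
    (hS_coercive : ∀ c : Fin N → ℝ, α * (p (∑ n, c n • e n))^2 ≤ c ⬝ᵥ S.mulVec c)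
    (hS_cont : ∀ c d : Fin N → ℝ,
      d ⬝ᵥ S.mulVec c ≤ A * p (∑ n, c n • e n) * p (∑ n, d n • e n))
    -- `S†` solves the saddle-point system: `P (S† ξ) = 0` and
    -- `ξ − S (S† ξ) ∈ range Pᵀ`
    (Sdag : Matrix (Fin N) (Fin N) ℝ)
    (hSdag_ker : ∀ ξ : Fin N → ℝ, P.mulVec (Sdag.mulVec ξ) = 0)
    (hSdag_solve : ∀ ξ : Fin N → ℝ, ∃ lam : Fin M → ℝ,
      ξ - S.mulVec (Sdag.mulVec ξ) = Pᵀ.mulVec lam) :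
    ∀ c d : Fin N → ℝ,
      c ⬝ᵥ Sdag.mulVec d ≤
        α⁻¹ * pstar (∑ n, c n • φ n) * pstar (∑ n, d n • φ n) := by
  intro c d
  have hdominated := dominatedOn_of_norm_le_mul (K := LinearMap.ker Pih.toLinearMap) hpoincare
  rw [hpstar, hpstar]
  exact dual_bilinear_form_continuous_general
    (fun x hx => apply_sum_smul_eq_zero_of_mulVec_eq_zero (f := fun i => (ehatstar i).toLinearMap)
      hPih_repr hP hx)
    hα (fun x _ => hS_coercive x) hSdag_ker hSdag_solve (hdominated _) (hdominated _)
    (sum_smul_apply_of_biorthogonal hbiorth c) (sum_smul_apply_of_biorthogonal hbiorth d)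
end

section
/- Under the stated assumptions, for every η ∈ W* one has C_poi⁻¹ · β · p*(η) ≤ sup { η(w) / p(w) : w ∈ W, Π̂ w = 0, w ≠ 0 } ≤ p*(η) (with the supremum over the empty set interpreted as 0); that is, on W* the dual seminorm p* is equivalent to its restriction computed by duality against W ∩ ker Π̂ alone. -/
/-!
Given `η`, the functional `ξ = η - η ∘ Π̂` satisfies `ξ w = η (w - Π̂ w)`, where `w - Π̂ w ∈ ker Π̂`.
On `ker Π̂` it agrees with `η`, so the Poincaré inequality gives `p*(η) ≤ C ‖ξ‖`. Conversely,
`w ↦ w - Π̂ w` maps `W` into `W ∩ ker Π̂` and `p (w - Π̂ w) ≤ p w ≤ ‖w‖`, so testing `ξ` against `W`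
with the norm gives at most what testing `η` against `W ∩ ker Π̂` with `p` gives. The inf-sup
condition for `ξ` links the two estimates.
-/

section Module

variable {E : Type*} [AddCommGroup E] [Module ℝ E]

/-- The dual seminorm of a linear functional `f` with respect to `p`, computed by testing only
against the subspace `K`. Elements with `p v = 0` contribute the junk value `f v / 0 = 0`, which is
harmless when `f` is bounded by a multiple of `p` on `K`; the value is also `0` when the quotients
are unbounded or `K` is trivial. -/
noncomputable def dualSeminormOn (p : Seminorm ℝ E) (K : Submodule ℝ E) (f : E →ₗ[ℝ] ℝ) : ℝ :=
  sSup ((fun v => f v / p v) '' {v | v ∈ K ∧ v ≠ 0})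

variable {p q : Seminorm ℝ E} {K L W : Submodule ℝ E} {f : E →ₗ[ℝ] ℝ} {C : ℝ}

theorem dualSeminormOn_nonneg (p : Seminorm ℝ E) (K : Submodule ℝ E) (f : E →ₗ[ℝ] ℝ) :
    0 ≤ dualSeminormOn p K f := by
  obtain hK | ⟨v, hvK, hv⟩ := {v | v ∈ K ∧ v ≠ 0}.eq_empty_or_nonempty
  · simp [dualSeminormOn, hK]
  · apply Real.sSup_nonneg'
    obtain hfv | hfv := le_total 0 (f v)
    · exact ⟨_, ⟨v, ⟨hvK, hv⟩, rfl⟩, div_nonneg hfv (apply_nonneg p v)⟩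
    · refine ⟨_, ⟨-v, ⟨K.neg_mem hvK, neg_ne_zero.mpr hv⟩, rfl⟩, ?_⟩
      exact div_nonneg (by simpa using hfv) (apply_nonneg p (-v))

theorem dualSeminormOn_le (hC : 0 ≤ C) (hf : ∀ v ∈ K, f v ≤ C * p v) :
    dualSeminormOn p K f ≤ C := by
  refine Real.sSup_le ?_ hC
  rintro _ ⟨v, ⟨hvK, -⟩, rfl⟩
  exact div_le_of_le_mul₀ (apply_nonneg p v) hC (hf v hvK)

theorem bddAbove_image_div_seminorm (hf : ∀ v ∈ K, f v ≤ C * p v) :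
    BddAbove ((fun v => f v / p v) '' {v | v ∈ K ∧ v ≠ 0}) := by
  refine ⟨|C|, ?_⟩
  rintro _ ⟨v, ⟨hvK, -⟩, rfl⟩
  refine div_le_of_le_mul₀ (apply_nonneg p v) (abs_nonneg C) ((hf v hvK).trans ?_)
  gcongr
  exact le_abs_self C

theorem le_dualSeminormOn_mul (hf : ∀ v ∈ K, f v ≤ C * p v) {v : E} (hv : v ∈ K) :
    f v ≤ dualSeminormOn p K f * p v := by
  obtain hpv | hpv := (apply_nonneg p v).eq_or_lt
  · simpa [← hpv] using hf v hv
  · have hv0 : v ≠ 0 := by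
      rintro rfl
      simp at hpv
    exact (div_le_iff₀ hpv).mp
      (le_csSup (bddAbove_image_div_seminorm hf) ⟨v, ⟨hv, hv0⟩, rfl⟩)

theorem dualSeminormOn_mono (hKL : K ≤ L) (hf : ∀ v ∈ L, f v ≤ C * p v) :
    dualSeminormOn p K f ≤ dualSeminormOn p L f :=
  dualSeminormOn_le (dualSeminormOn_nonneg p L f) fun _ hv => le_dualSeminormOn_mul hf (hKL hv)

theorem dualSeminormOn_sub_comp_le {P : E →ₗ[ℝ] E} (hidem : ∀ v, P (P v) = P v)
    (hPW : ∀ w ∈ W, P w ∈ W) (hpq : ∀ w ∈ W, p (w - P w) ≤ q w)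
    (hf : ∀ v ∈ W ⊓ LinearMap.ker P, f v ≤ C * p v) :
    dualSeminormOn q W (f - f ∘ₗ P) ≤ dualSeminormOn p (W ⊓ LinearMap.ker P) f := by
  have hS := dualSeminormOn_nonneg p (W ⊓ LinearMap.ker P) f
  refine dualSeminormOn_le hS fun w hw => ?_
  have hmem : w - P w ∈ W ⊓ LinearMap.ker P :=
    ⟨W.sub_mem hw (hPW w hw), by simp [hidem]⟩
  calc (f - f ∘ₗ P) w = f (w - P w) := by simp
    _ ≤ dualSeminormOn p (W ⊓ LinearMap.ker P) f * p (w - P w) := le_dualSeminormOn_mul hf hmem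
    _ ≤ dualSeminormOn p (W ⊓ LinearMap.ker P) f * q w := by gcongr; exact hpq w hw

end Module

section Seminormed

variable {V : Type*} [SeminormedAddCommGroup V] [NormedSpace ℝ V] {p : Seminorm ℝ V} {C : ℝ}

theorem apply_le_mul_opNorm_mul_seminorm (η : V →L[ℝ] ℝ) {v : V} (hv : ‖v‖ ≤ C * p v) :
    η v ≤ C * ‖η‖ * p v :=
  calc η v ≤ ‖η v‖ := Real.le_norm_self _
    _ ≤ ‖η‖ * (C * p v) := η.le_opNorm_of_le hv
    _ = C * ‖η‖ * p v := by ring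

theorem dualSeminormOn_ker_le_norm_sub_comp (hC : 0 ≤ C) {P : V →L[ℝ] V}
    (hpoincare : ∀ v, P v = 0 → ‖v‖ ≤ C * p v) (η : V →L[ℝ] ℝ) :
    dualSeminormOn p (LinearMap.ker (P : V →ₗ[ℝ] V)) η ≤ C * ‖η - η.comp P‖ := by
  refine dualSeminormOn_le (by positivity) fun v hv => ?_
  have hPv : P v = 0 := hv
  have hagree : (η - η.comp P) v = η v := by simp [hPv]
  exact hagree ▸ apply_le_mul_opNorm_mul_seminorm (η - η.comp P) (hpoincare v hPv)

theorem dual_seminorm_equivalence_on_discrete_space_general (hple : ∀ v, p v ≤ ‖v‖)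
    {P : V →L[ℝ] V} (hidem : ∀ v, P (P v) = P v) (hpP : ∀ v, p (P v) = 0)
    (hC : 0 < C) (hpoincare : ∀ v, P v = 0 → ‖v‖ ≤ C * p v)
    {W : Submodule ℝ V} (hPW : ∀ w ∈ W, P w ∈ W) {β : ℝ} (hβ : 0 ≤ β) {η : V →L[ℝ] ℝ}
    (hinfsup : β * ‖η - η.comp P‖ ≤
      dualSeminormOn (normSeminorm ℝ V) W (η - η.comp P : V →L[ℝ] ℝ)) :
    C⁻¹ * β * dualSeminormOn p (LinearMap.ker (P : V →ₗ[ℝ] V)) η ≤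
        dualSeminormOn p (W ⊓ LinearMap.ker (P : V →ₗ[ℝ] V)) η ∧
      dualSeminormOn p (W ⊓ LinearMap.ker (P : V →ₗ[ℝ] V)) η ≤
        dualSeminormOn p (LinearMap.ker (P : V →ₗ[ℝ] V)) η := by
  have hη : ∀ v ∈ LinearMap.ker (P : V →ₗ[ℝ] V), η v ≤ C * ‖η‖ * p v := fun v hv =>
    apply_le_mul_opNorm_mul_seminorm η (hpoincare v hv)
  have hcompl (w : V) : p (w - P w) ≤ ‖w‖ := by
    simpa [hpP] using (map_sub_le_add p w (P w)).trans (add_le_add_left (hple w) _)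
  refine ⟨?_, dualSeminormOn_mono inf_le_right hη⟩
  calc C⁻¹ * β * dualSeminormOn p (LinearMap.ker (P : V →ₗ[ℝ] V)) η
      ≤ C⁻¹ * β * (C * ‖η - η.comp P‖) := by
        gcongr
        exact dualSeminormOn_ker_le_norm_sub_comp hC.le hpoincare η
    _ = β * ‖η - η.comp P‖ := by field_simp
    _ ≤ dualSeminormOn (normSeminorm ℝ V) W (η - η.comp P : V →L[ℝ] ℝ) := hinfsup
    _ ≤ dualSeminormOn p (W ⊓ LinearMap.ker (P : V →ₗ[ℝ] V)) η :=
        dualSeminormOn_sub_comp_le hidem hPW (fun w _ => hcompl w) fun v hv => hη v hv.2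

end Seminormed

/-- On `W*`, the dual seminorm `p*` is equivalent to the
seminorm computed by duality against `W ∩ ker Π̂` alone:
`C_poi⁻¹ · β · p*(η) ≤ sup { η(w)/p(w) : w ∈ W ∩ ker Π̂, w ≠ 0 } ≤ p*(η)`. -/
theorem dual_seminorm_equivalence_on_discrete_space
    {V : Type*} [NormedAddCommGroup V] [InnerProductSpace ℝ V] [CompleteSpace V]
    (p : Seminorm ℝ V) (hple : ∀ v : V, p v ≤ ‖v‖)
    (Pih : V →L[ℝ] V) (hidem : ∀ v : V, Pih (Pih v) = Pih v)
    (hrange : ∀ v : V, p v = 0 ↔ ∃ u : V, Pih u = v)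
    (Cpoi : ℝ) (hCpoi : 0 < Cpoi)
    (hpoincare : ∀ v : V, Pih v = 0 → ‖v‖ ≤ Cpoi * p v)
    (pstar : (V →L[ℝ] ℝ) → ℝ)
    (hpstar : ∀ η : V →L[ℝ] ℝ,
      pstar η = sSup ((fun v => η v / p v) '' {v : V | Pih v = 0 ∧ v ≠ 0}))
    (W : Submodule ℝ V) (Wstar : Submodule ℝ (V →L[ℝ] ℝ))
    [FiniteDimensional ℝ W] [FiniteDimensional ℝ Wstar]
    (hWhat : ∀ u : V, Pih u ∈ W)
    (hWstarPih : ∀ η : V →L[ℝ] ℝ, η ∈ Wstar → η.comp Pih ∈ Wstar)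
    (β : ℝ) (hβ : 0 < β)
    (hinfsup : ∀ η ∈ Wstar, β * ‖η‖ ≤
      sSup ((fun w : V => η w / ‖w‖) '' {w : V | w ∈ W ∧ w ≠ 0})) :
    ∀ η : V →L[ℝ] ℝ, η ∈ Wstar →
      Cpoi⁻¹ * β * pstar η ≤
          sSup ((fun w : V => η w / p w) ''
            {w : V | w ∈ W ∧ Pih w = 0 ∧ w ≠ 0}) ∧
        sSup ((fun w : V => η w / p w) ''
            {w : V | w ∈ W ∧ Pih w = 0 ∧ w ≠ 0}) ≤ pstar η := by
  intro η hη
  simpa only [hpstar, dualSeminormOn, Submodule.mem_inf, and_assoc] using!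
    dual_seminorm_equivalence_on_discrete_space_general hple hidem (fun u => (hrange _).2 ⟨u, rfl⟩)
      hCpoi hpoincare (fun w _ => hWhat w) hβ.le
      (hinfsup _ (Wstar.sub_mem hη (hWstarPih η hη)))
end
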